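/- arXiv:2012.01880 — 2 statements merged into one kernel-verified Lean document; each statement's English description precedes it below -/
import Mathlib

section
/- Every pure strategy Nash equilibrium x of the BNPG game on the graph H constructed from the General Factor instance satisfies x_{d_1} = 1, x_{d_2} = 0, x_{u′_{n+1}} = 0, and x_{u_i} = x_{u′_i} = 1 for every i ∈ [n]. -/
/-- The number of neighbors of `v` playing `1` (`true`) in the strategy profile `x`. -/
noncomputable def nOnes {V : Type*} (G : SimpleGraph V) (x : V → Bool) (v : V) : ℕ :=
  Nat.card {w : V // G.Adj v w ∧ x w = true}

/-- `x` is a pure strategy Nash equilibrium (PSNE) of the BNPG game `(G, g, c)`: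
for every player `v`, if `v` plays `1` then `g_v(n_v+1) - g_v(n_v) ≥ c_v`, and if `v` plays `0`
then `g_v(n_v+1) - g_v(n_v) ≤ c_v`. -/
def IsPSNE {V : Type*} (G : SimpleGraph V) (g : V → ℕ → ℝ) (c : V → ℝ) (x : V → Bool) : Prop :=
  ∀ v : V,
    (x v = true → c v ≤ g v (nOnes G x v + 1) - g v (nOnes G x v)) ∧
    (x v = false → g v (nOnes G x v + 1) - g v (nOnes G x v) ≤ c v)
/-- Vertices of the graph `H` built from the General Factor instance on `G₀`:
`uVert i = Sum.inl i` is `u_i`; `aVert e = Sum.inr (Sum.inl e)` is `a_{{i,j}}` for the edge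
`e = {v_i, v_j}` of `G₀`; `u'Vert i = Sum.inr (Sum.inr (Sum.inl i))` is `u′_i`
(for `i : Fin (n+1)`); `dVert false` is `d_1` and `dVert true` is `d_2`. -/
abbrev GFV (n : ℕ) (G₀ : SimpleGraph (Fin n)) :=
  Fin n ⊕ (↥G₀.edgeSet ⊕ (Fin (n + 1) ⊕ Bool))

abbrev uVert {n : ℕ} {G₀ : SimpleGraph (Fin n)} (i : Fin n) : GFV n G₀ := Sum.inl i
abbrev aVert {n : ℕ} {G₀ : SimpleGraph (Fin n)} (e : ↥G₀.edgeSet) : GFV n G₀ :=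
  Sum.inr (Sum.inl e)
abbrev u'Vert {n : ℕ} {G₀ : SimpleGraph (Fin n)} (i : Fin (n + 1)) : GFV n G₀ :=
  Sum.inr (Sum.inr (Sum.inl i))
abbrev dVert {n : ℕ} {G₀ : SimpleGraph (Fin n)} (b : Bool) : GFV n G₀ :=
  Sum.inr (Sum.inr (Sum.inr b))

/-- Edges of `H`: `{u_i, a_e}` whenever `i ∈ e`; `{u_i, u′_i}` for `i ∈ [n]`;
`{d_1, u′_i}` for all `i ∈ [n+1]` (this covers both `{d_1, u′_i}, i ∈ [n]` and
`{d_1, u′_{n+1}}`); `{d_2, u_i}` for `i ∈ [n]`; and `{d_2, u′_{n+1}}`.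
(The graph `H` is `SimpleGraph.fromRel` of this relation.) -/
def gfRel {n : ℕ} (G₀ : SimpleGraph (Fin n)) : GFV n G₀ → GFV n G₀ → Prop
  | Sum.inl i, Sum.inr (Sum.inl e) => i ∈ e.1
  | Sum.inl i, Sum.inr (Sum.inr (Sum.inl i')) => (i' : ℕ) = (i : ℕ)
  | Sum.inr (Sum.inr (Sum.inr false)), Sum.inr (Sum.inr (Sum.inl _)) => True
  | Sum.inr (Sum.inr (Sum.inr true)), Sum.inl _ => True
  | Sum.inr (Sum.inr (Sum.inr true)), Sum.inr (Sum.inr (Sum.inl i')) => (i' : ℕ) = n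
  | _, _ => False

/-- The graph `H` of the reduction from General Factor. -/
def gfGraph {n : ℕ} (G₀ : SimpleGraph (Fin n)) : SimpleGraph (GFV n G₀) :=
  SimpleGraph.fromRel (gfRel G₀)

theorem nOnes_eq_ncard {V : Type*} (G : SimpleGraph V) (x : V → Bool) (v : V) :
    nOnes G x v = {w : V | G.Adj v w ∧ x w = true}.ncard := rfl

theorem nOnes_eq_zero {V : Type*} [Finite V] (G : SimpleGraph V) (x : V → Bool) (v : V) :
    nOnes G x v = 0 ↔ ∀ w, G.Adj v w → x w = false := by
  rw [nOnes_eq_ncard, Set.ncard_eq_zero (Set.toFinite _), Set.eq_empty_iff_forall_notMem]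
  simp

theorem nOnes_eq_two {V : Type*} (G : SimpleGraph V) (x : V → Bool) (v a b : V)
    (hab : a ≠ b) (h : ∀ w, G.Adj v w ↔ w = a ∨ w = b) :
    nOnes G x v = 2 ↔ x a = true ∧ x b = true := by
  rw [nOnes_eq_ncard]
  have hsub : {w : V | G.Adj v w ∧ x w = true} ⊆ {a, b} := by
    intro w hw
    simpa using (h w).1 hw.1
  constructor
  · intro h2
    have heq := Set.eq_of_subset_of_ncard_le hsub
      (by rw [h2, Set.ncard_pair hab]) (Set.toFinite _)
    have h1 : a ∈ {w : V | G.Adj v w ∧ x w = true} := by rw [heq]; simp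
    have h2 : b ∈ {w : V | G.Adj v w ∧ x w = true} := by rw [heq]; simp
    exact ⟨h1.2, h2.2⟩
  · rintro ⟨h1, h2⟩
    have : {w : V | G.Adj v w ∧ x w = true} = {a, b} := by
      apply hsub.antisymm
      intro w hw
      have hw' : w = a ∨ w = b := by simpa using hw
      refine ⟨(h w).2 hw', ?_⟩
      rcases hw' with rfl | rfl <;> assumption
    rw [this, Set.ncard_pair hab]

theorem adj_u'_castSucc {n : ℕ} (G₀ : SimpleGraph (Fin n)) (i : Fin n) (w : GFV n G₀) :
    (gfGraph G₀).Adj (u'Vert i.castSucc) w ↔ w = dVert false ∨ w = uVert i := by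
  have := i.2
  rcases w with j | e | j | (_ | _) <;>
    simp [gfGraph, gfRel, Fin.ext_iff] <;> omega

theorem adj_u'_last {n : ℕ} (G₀ : SimpleGraph (Fin n)) (w : GFV n G₀) :
    (gfGraph G₀).Adj (u'Vert (Fin.last n)) w ↔ w = dVert false ∨ w = dVert true := by
  rcases w with j | e | j | (_ | _) <;>
    simp [gfGraph, gfRel] <;> omega

theorem adj_d1 {n : ℕ} (G₀ : SimpleGraph (Fin n)) (w : GFV n G₀) :
    (gfGraph G₀).Adj (dVert false) w ↔ ∃ i, u'Vert i = w := by
  rcases w with j | e | j | (_ | _) <;> simp [gfGraph, gfRel]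

theorem adj_d2 {n : ℕ} (G₀ : SimpleGraph (Fin n)) (w : GFV n G₀) :
    (gfGraph G₀).Adj (dVert true) w ↔ w = u'Vert (Fin.last n) ∨ ∃ i, uVert i = w := by
  rcases w with j | e | j | (_ | _) <;> simp [gfGraph, gfRel, Fin.ext_iff]

theorem nOnes_d1 {n : ℕ} (G₀ : SimpleGraph (Fin n)) (x : GFV n G₀ → Bool) :
    nOnes (gfGraph G₀) x (dVert false) = {i | x (u'Vert i) = true}.ncard := by
  rw [nOnes_eq_ncard, ← Set.ncard_image_of_injective (f := (u'Vert (G₀ := G₀)))]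
  · congr 1
    ext w
    simp only [Set.mem_setOf_eq, Set.mem_image, adj_d1]
    constructor
    · rintro ⟨⟨i, rfl⟩, h⟩
      exact ⟨i, h, rfl⟩
    · rintro ⟨i, h, rfl⟩
      exact ⟨⟨i, rfl⟩, h⟩
  · intro a b h
    simpa using h

/-- With the BNPG game on `H` as in the General Factor reduction, every pure
strategy Nash equilibrium `x` satisfies `x_{d_1} = 1`, `x_{d_2} = 0`, `x_{u′_{n+1}} = 0`, and
`x_{u_i} = x_{u′_i} = 1` for every `i ∈ [n]`. -/
theorem gf_psne_structure (n : ℕ) (G₀ : SimpleGraph (Fin n)) (K : Fin n → Set ℕ)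
    (hK : ∀ i : Fin n, K i ⊆ {k | k ≤ Nat.card (G₀.neighborSet i)})
    (g : GFV n G₀ → ℕ → ℝ) (c : GFV n G₀ → ℝ)
    (hMono : ∀ v, Monotone (g v)) (hc : ∀ v, 0 < c v)
    (hu : ∀ (i : Fin n) (k : ℕ),
      (1 ≤ k ∧ k - 1 ∈ K i → c (uVert i) < g (uVert i) (k + 1) - g (uVert i) k) ∧
      (¬(1 ≤ k ∧ k - 1 ∈ K i) → g (uVert i) (k + 1) - g (uVert i) k < c (uVert i)))
    (ha : ∀ (e : ↥G₀.edgeSet) (k : ℕ),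
      g (aVert e) (k + 1) - g (aVert e) k = c (aVert e))
    (hu' : ∀ (i : Fin (n + 1)) (k : ℕ),
      (k = 2 → c (u'Vert i) < g (u'Vert i) (k + 1) - g (u'Vert i) k) ∧
      (k ≠ 2 → g (u'Vert i) (k + 1) - g (u'Vert i) k < c (u'Vert i)))
    (hd1 : ∀ k : ℕ,
      (k = 0 ∨ k = n →
        c (dVert (G₀ := G₀) false) < g (dVert false) (k + 1) - g (dVert false) k) ∧
      (¬(k = 0 ∨ k = n) →
        g (dVert (G₀ := G₀) false) (k + 1) - g (dVert false) k < c (dVert false)))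
    (hd2 : ∀ k : ℕ,
      (k = 0 → c (dVert (G₀ := G₀) true) < g (dVert true) (k + 1) - g (dVert true) k) ∧
      (1 ≤ k → g (dVert (G₀ := G₀) true) (k + 1) - g (dVert true) k < c (dVert true)))
    (x : GFV n G₀ → Bool) (hx : IsPSNE (gfGraph G₀) g c x) :
    x (dVert false) = true ∧ x (dVert true) = false ∧ x (u'Vert (Fin.last n)) = false ∧
      ∀ i : Fin n, x (uVert i) = true ∧ x (u'Vert i.castSucc) = true := by
  have hd1t : x (dVert false) = true → nOnes (gfGraph G₀) x (dVert false) = 0 ∨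
      nOnes (gfGraph G₀) x (dVert false) = n := by
    intro h
    by_contra hn
    exact absurd ((hx _).1 h) (not_le.2 ((hd1 _).2 hn))
  have hd1f : nOnes (gfGraph G₀) x (dVert false) = 0 → x (dVert false) = true := by
    intro h
    by_contra hn
    exact absurd ((hx _).2 (by simpa using hn)) (not_le.2 ((hd1 _).1 (Or.inl h)))
  have hd2t : nOnes (gfGraph G₀) x (dVert true) = 0 ↔ x (dVert true) = true := by
    constructor
    · intro h
      by_contra hn
      exact absurd ((hx _).2 (by simpa using hn)) (not_le.2 ((hd2 _).1 h))
    · intro h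
      by_contra hn
      exact absurd ((hx _).1 h) (not_le.2 ((hd2 _).2 (by omega)))
  have hut : ∀ i, nOnes (gfGraph G₀) x (u'Vert i) = 2 ↔ x (u'Vert i) = true := by
    intro i
    constructor
    · intro h
      by_contra hn
      exact absurd ((hx _).2 (by simpa using hn)) (not_le.2 ((hu' _ _).1 h))
    · intro h
      by_contra hn
      exact absurd ((hx _).1 h) (not_le.2 ((hu' _ _).2 hn))
  have hc1 : ∀ i : Fin n, x (u'Vert i.castSucc) = true ↔
      x (dVert false) = true ∧ x (uVert i) = true := fun i =>
    (hut _).symm.trans (nOnes_eq_two _ _ _ _ _ (by simp) (adj_u'_castSucc G₀ i))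
  have hl1 : x (u'Vert (Fin.last n)) = true ↔
      x (dVert false) = true ∧ x (dVert true) = true :=
    (hut _).symm.trans (nOnes_eq_two _ _ _ _ _ (by simp) (adj_u'_last G₀))
  have hD1 : x (dVert false) = true := by
    by_contra hn
    apply hn
    apply hd1f
    rw [nOnes_eq_zero]
    intro w hw
    obtain ⟨i, rfl⟩ := (adj_d1 G₀ w).1 hw
    rw [← Bool.not_eq_true]
    intro h
    induction i using Fin.lastCases with
    | last => exact hn (hl1.1 h).1
    | cast i => exact hn ((hc1 i).1 h).1
  have hD2 : x (dVert true) = false := by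
    rw [← Bool.not_eq_true]
    intro h
    have h0 := (nOnes_eq_zero _ _ _).1 (hd2t.2 h) _ ((adj_d2 G₀ _).2 (Or.inl rfl))
    rw [hl1.2 ⟨hD1, h⟩] at h0
    exact absurd h0 (by simp)
  have hL : x (u'Vert (Fin.last n)) = false := by
    rw [← Bool.not_eq_true]
    intro h
    rw [(hl1.1 h).2] at hD2
    exact absurd hD2 (by simp)
  have hall : ∀ i : Fin n, x (u'Vert i.castSucc) = true := by
    rcases hd1t hD1 with h0 | h0
    · exfalso
      have hz := (nOnes_eq_zero _ _ _).1 h0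
      have : x (dVert true) = true := by
        rw [← hd2t, nOnes_eq_zero]
        intro w hw
        rcases (adj_d2 G₀ w).1 hw with rfl | ⟨i, rfl⟩
        · exact hL
        · rw [← Bool.not_eq_true]
          intro h
          have h1 := hz _ ((adj_d1 G₀ _).2 ⟨i.castSucc, rfl⟩)
          rw [(hc1 i).2 ⟨hD1, h⟩] at h1
          exact absurd h1 (by simp)
      rw [this] at hD2
      exact absurd hD2 (by simp)
    · rw [nOnes_d1] at h0
      have hsub : {i | x (u'Vert i) = true} ⊆ ({Fin.last n}ᶜ : Set (Fin (n + 1))) := by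
        intro i hi
        simp only [Set.mem_compl_iff, Set.mem_singleton_iff]
        rintro rfl
        rw [Set.mem_setOf_eq, hL] at hi
        exact absurd hi (by simp)
      have hcard : ({Fin.last n}ᶜ : Set (Fin (n + 1))).ncard = n := by
        rw [Set.ncard_compl]
        simp
      have heq := Set.eq_of_subset_of_ncard_le hsub (by rw [h0, hcard]) (Set.toFinite _)
      intro i
      have : i.castSucc ∈ {i | x (u'Vert i) = true} := by
        rw [heq]
        simp
      exact this
  exact ⟨hD1, hD2, hL, fun i => ⟨((hc1 i).1 (hall i)).2, hall i⟩⟩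
end

section
/- Every vertex of H has degree at most 9, and the heterogeneous BNPG game on G has a pure strategy Nash equilibrium if and only if the fully homogeneous BNPG game (g, c) on H has a pure strategy Nash equilibrium. -/
/-- Vertices of the graph `H`: `Sum.inl k` is `w_k` (for the player `v_k` of `G`), and
`Sum.inr ⟨k, a⟩` is one of the pendant vertices attached to `w_k`; a player `v_k` of type
`V_1` (`t k = false`) gets `2` pendants, and one of type `V_2` (`t k = true`) gets
`2 + 4·(2-1) = 6` pendants. -/
abbrev HomV2 (n : ℕ) (t : Fin n → Bool) :=
  Fin n ⊕ (Σ k : Fin n, Fin (if t k then 6 else 2))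

/-- Edges of `H`: `{w_i, w_j}` whenever `{v_i, v_j}` is an edge of `G`, and each pendant vertex
of `w_k` is adjacent exactly to `w_k`.  (`H` is `SimpleGraph.fromRel` of this.) -/
def homRel2 {n : ℕ} (t : Fin n → Bool) (G₀ : SimpleGraph (Fin n)) :
    HomV2 n t → HomV2 n t → Prop
  | Sum.inl i, Sum.inl j => G₀.Adj i j
  | Sum.inl i, Sum.inr p => p.1 = i
  | _, _ => False

/-- The graph `H` of the bounded-degree heterogeneous-to-fully-homogeneous reduction. -/
def homGraph2 {n : ℕ} (t : Fin n → Bool) (G₀ : SimpleGraph (Fin n)) :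
    SimpleGraph (HomV2 n t) :=
  SimpleGraph.fromRel (homRel2 t G₀)

theorem homAdj_ll {n : ℕ} (t : Fin n → Bool) (G₀ : SimpleGraph (Fin n)) (i j : Fin n) :
    (homGraph2 t G₀).Adj (Sum.inl i) (Sum.inl j) ↔ G₀.Adj i j := by
  simp only [homGraph2, SimpleGraph.fromRel_adj, homRel2]
  constructor
  · rintro ⟨_, h | h⟩
    · exact h
    · exact h.symm
  · intro h
    exact ⟨fun e => h.ne (Sum.inl.inj e), Or.inl h⟩

theorem homAdj_lr {n : ℕ} (t : Fin n → Bool) (G₀ : SimpleGraph (Fin n)) (i : Fin n)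
    (p : Σ k : Fin n, Fin (if t k then 6 else 2)) :
    (homGraph2 t G₀).Adj (Sum.inl i) (Sum.inr p) ↔ p.1 = i := by
  simp [homGraph2, SimpleGraph.fromRel_adj, homRel2]

theorem homAdj_rr {n : ℕ} (t : Fin n → Bool) (G₀ : SimpleGraph (Fin n))
    (p q : Σ k : Fin n, Fin (if t k then 6 else 2)) :
    ¬ (homGraph2 t G₀).Adj (Sum.inr p) (Sum.inr q) := by
  simp [homGraph2, SimpleGraph.fromRel_adj, homRel2]

theorem nOnes_pendant {n : ℕ} (t : Fin n → Bool) (G₀ : SimpleGraph (Fin n))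
    (y : HomV2 n t → Bool) (p : Σ k : Fin n, Fin (if t k then 6 else 2)) :
    nOnes (homGraph2 t G₀) y (Sum.inr p) ≤ 1 := by
  unfold nOnes
  rw [Finite.card_le_one_iff_subsingleton]
  have key : ∀ w, (homGraph2 t G₀).Adj (Sum.inr p) w → w = Sum.inl p.1 := by
    rintro (j | q) h
    · rw [((homAdj_lr t G₀ j p).1 h.symm)]
    · exact absurd h (homAdj_rr t G₀ p q)
  exact ⟨fun a b => Subtype.ext ((key _ a.2.1).trans (key _ b.2.1).symm)⟩

theorem nOnes_main {n : ℕ} (t : Fin n → Bool) (G₀ : SimpleGraph (Fin n))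
    (y : HomV2 n t → Bool) (hy : ∀ p, y (Sum.inr p) = true) (i : Fin n) :
    nOnes (homGraph2 t G₀) y (Sum.inl i) =
      nOnes G₀ (fun j => y (Sum.inl j)) i + (if t i then 6 else 2) := by
  unfold nOnes
  rw [Nat.card_congr (Equiv.subtypeSum), Nat.card_sum]
  simp only [homAdj_ll, homAdj_lr, hy, and_true]
  rw [Nat.card_congr (Equiv.sigmaSubtype (β := fun k : Fin n => Fin (if t k then 6 else 2)) i)]
  simp

theorem nOnes_le {n : ℕ} (G₀ : SimpleGraph (Fin n)) (x : Fin n → Bool) (v : Fin n) :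
    nOnes G₀ x v ≤ Nat.card (G₀.neighborSet v) :=
  Nat.card_le_card_of_injective (fun w => (⟨w.1, w.2.1⟩ : G₀.neighborSet v))
    (fun a b h => Subtype.ext (congrArg (fun z => z.1) h))

theorem card_nbr_eq {V : Type*} (G : SimpleGraph V) (v : V) :
    Nat.card (G.neighborSet v) = nOnes G (fun _ => true) v := by
  unfold nOnes
  exact Nat.card_congr (Equiv.subtypeEquivRight (fun w => by simp))

/-- Let `(G₀, (g_v), (c_v))` be a BNPG game of maximum degree at most `3` with
two utility types: player `v` of type `t v ∈ {false, true}` (i.e. `v ∈ V_1` or `v ∈ V_2`) has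
utility data `(gt (t v), ct (t v))`.  Let `(g, c)` be any fully homogeneous BNPG game on the
graph `H` built from `G₀` satisfying `Δg(0) > c`, `Δg(1) > c`, and for every `2 ≤ k ≤ 9`
(writing `f(k) - 1 = (k-2)/4`, identified with the type `b`, and `h(k) = k - 2 - 4·((k-2)/4)`):
`Δg(k) ≥ c ↔ Δg_{f(k)}(h(k)) ≥ c_{f(k)}` and `Δg(k) ≤ c ↔ Δg_{f(k)}(h(k)) ≤ c_{f(k)}`.
Then every vertex of `H` has degree at most `9`, and the heterogeneous game on `G₀` has a PSNE
iff the fully homogeneous game `(g, c)` on `H` has a PSNE. -/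
theorem hetero_iff_homo_deg9 (n : ℕ) (G₀ : SimpleGraph (Fin n))
    (hdeg : ∀ v : Fin n, Nat.card (G₀.neighborSet v) ≤ 3)
    (t : Fin n → Bool) (gt : Bool → ℕ → ℝ) (ct : Bool → ℝ)
    (hMonoG : ∀ b, Monotone (gt b)) (hcG : ∀ b, 0 < ct b)
    (g : ℕ → ℝ) (c : ℝ) (hMono : Monotone g) (hc : 0 < c)
    (h0 : c < g 1 - g 0) (h1 : c < g 2 - g 1)
    (hg : ∀ (k : ℕ) (b : Bool), 2 ≤ k → k ≤ 9 → (k - 2) / 4 = (if b then 1 else 0) →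
      ((c ≤ g (k + 1) - g k ↔
          ct b ≤ gt b (k - 2 - 4 * ((k - 2) / 4) + 1) - gt b (k - 2 - 4 * ((k - 2) / 4))) ∧
       (g (k + 1) - g k ≤ c ↔
          gt b (k - 2 - 4 * ((k - 2) / 4) + 1) - gt b (k - 2 - 4 * ((k - 2) / 4)) ≤ ct b))) :
    (∀ w : HomV2 n t, Nat.card ((homGraph2 t G₀).neighborSet w) ≤ 9) ∧
      ((∃ x : Fin n → Bool, IsPSNE G₀ (fun v => gt (t v)) (fun v => ct (t v)) x) ↔
        ∃ y : HomV2 n t → Bool, IsPSNE (homGraph2 t G₀) (fun _ => g) (fun _ => c) y) := by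
  have key : ∀ (m : ℕ) (b : Bool), m ≤ 3 →
      ((c ≤ g (m + (if b then 6 else 2) + 1) - g (m + (if b then 6 else 2)) ↔
        ct b ≤ gt b (m + 1) - gt b m) ∧
      (g (m + (if b then 6 else 2) + 1) - g (m + (if b then 6 else 2)) ≤ c ↔
        gt b (m + 1) - gt b m ≤ ct b)) := by
    intro m b hm
    have h := hg (m + (if b then 6 else 2)) b (by split_ifs <;> omega) (by split_ifs <;> omega)
      (by split_ifs <;> omega)
    have e : (m + (if b then 6 else 2)) - 2 - 4 * (((m + (if b then 6 else 2)) - 2) / 4) = m := by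
      split_ifs <;> omega
    rwa [e] at h
  have hle : ∀ x v, nOnes G₀ x v ≤ 3 := fun x v => (nOnes_le G₀ x v).trans (hdeg v)
  have hpend : ∀ (y : HomV2 n t → Bool) p,
      c < g (nOnes (homGraph2 t G₀) y (Sum.inr p) + 1) -
        g (nOnes (homGraph2 t G₀) y (Sum.inr p)) := by
    intro y p
    have h := nOnes_pendant t G₀ y p
    generalize nOnes (homGraph2 t G₀) y (Sum.inr p) = m at h
    interval_cases m
    · exact h0
    · exact h1
  refine ⟨?_, ?_, ?_⟩
  · intro w
    rw [card_nbr_eq]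
    rcases w with i | p
    · rw [nOnes_main t G₀ _ (fun _ => rfl)]
      have := hle (fun _ => true) i
      split_ifs <;> omega
    · exact (nOnes_pendant t G₀ _ p).trans (by norm_num)
  · rintro ⟨x, hx⟩
    refine ⟨Sum.elim x (fun _ => true), ?_⟩
    rintro (i | p)
    · have hm := nOnes_main t G₀ (Sum.elim x (fun _ => true)) (fun _ => rfl) i
      have hk := key (nOnes G₀ x i) (t i) (hle x i)
      rw [hm]
      exact ⟨fun h => hk.1.2 ((hx i).1 h), fun h => hk.2.2 ((hx i).2 h)⟩
    · exact ⟨fun _ => (hpend _ p).le, fun h => by simp at h⟩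
  · rintro ⟨y, hy⟩
    have hp : ∀ p, y (Sum.inr p) = true := by
      intro p
      by_contra h
      exact absurd ((hy (Sum.inr p)).2 (by simpa using h)) (not_le.2 (hpend y p))
    refine ⟨fun j => y (Sum.inl j), fun i => ?_⟩
    have hk := key _ (t i) (hle (fun j => y (Sum.inl j)) i)
    have hi := hy (Sum.inl i)
    rw [nOnes_main t G₀ y hp i] at hi
    exact ⟨fun h => hk.1.1 (hi.1 h), fun h => hk.2.1 (hi.2 h)⟩
end
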